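/- Let Λ > 0, κ > 0 and R > √(3/Λ), and set H := √(Λ/3). There exists ε > 0 (depending only on Λ, κ, R) such that for every C¹ solution h : [0,∞)×[0,R] → ℝ of the reduced Einstein-Λ-scalar field equation Dh = G(h − h̄) with sup_{u≥0,0≤r≤R}(|h(u,r)| + |∂_r h(u,r)|) < ε, there is a constant C > 0 such that the associated metric coefficients satisfy |f(u,r) − 1| ≤ C e^{−2Hu} and |f̃(u,r) − (1 − (Λ/3) r²)| ≤ C e^{−2Hu} for all u ≥ 0 and 0 ≤ r ≤ R; i.e. the metric coefficients converge exponentially in Bondi time to those of de Sitter spacetime in Bondi coordinates. -/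

import Mathlib

noncomputable section

open Real Set

/-- Radial average `h̄(u,r) = (1/r)∫₀ʳ h(u,s) ds`, with `h̄(u,0) = h(u,0)`. -/
def radAvg (h : ℝ → ℝ → ℝ) (u r : ℝ) : ℝ :=
  if r = 0 then h u 0 else (1 / r) * ∫ s in (0:ℝ)..r, h u s

/-- Metric coefficient `f(u,r) = exp((κ/2)∫₀ʳ (h−h̄)²/s ds)`. -/
def metricF (κ : ℝ) (h : ℝ → ℝ → ℝ) (u r : ℝ) : ℝ :=
  Real.exp ((κ / 2) * ∫ s in (0:ℝ)..r, (h u s - radAvg h u s) ^ 2 / s)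

/-- Metric coefficient `f̃(u,r) = (1/r)∫₀ʳ f ds − (Λ/r)∫₀ʳ f s² ds`, with `f̃(u,0)=1`. -/
def metricFt (Λ κ : ℝ) (h : ℝ → ℝ → ℝ) (u r : ℝ) : ℝ :=
  if r = 0 then 1
  else (1 / r) * (∫ s in (0:ℝ)..r, metricF κ h u s)
    - (Λ / r) * (∫ s in (0:ℝ)..r, metricF κ h u s * s ^ 2)

/-- Zeroth order coefficient `G(u,r) = (1/(2r))[(f − f̃) − Λ f r²]`. -/
def coefG (Λ κ : ℝ) (h : ℝ → ℝ → ℝ) (u r : ℝ) : ℝ :=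
  (1 / (2 * r)) * ((metricF κ h u r - metricFt Λ κ h u r) - Λ * metricF κ h u r * r ^ 2)

/-- Partial derivative of `h` in the Bondi time `u`, one-sided on `[0,∞)`. -/
def pdU (h : ℝ → ℝ → ℝ) (u r : ℝ) : ℝ :=
  derivWithin (fun u' => h u' r) (Ici 0) u

/-- Partial derivative of `h` in the radial coordinate `r`, on `[0,R]`. -/
def pdR (R : ℝ) (h : ℝ → ℝ → ℝ) (u r : ℝ) : ℝ :=
  derivWithin (fun r' => h u r') (Icc 0 R) r

/-- `h : [0,∞)×[0,R] → ℝ` is a C¹ solution of the reduced Einstein-Λ-scalar field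
equation `Dh = G(h − h̄)`: it is continuous with continuous partial derivatives on the
rectangular domain and satisfies the equation for `0 < r ≤ R`. -/
def IsC1Solution (Λ κ R : ℝ) (h : ℝ → ℝ → ℝ) : Prop :=
  ContinuousOn (fun p : ℝ × ℝ => h p.1 p.2) (Ici 0 ×ˢ Icc 0 R) ∧
  (∀ u ∈ Ici (0:ℝ), ∀ r ∈ Icc (0:ℝ) R,
      DifferentiableWithinAt ℝ (fun u' => h u' r) (Ici 0) u ∧
      DifferentiableWithinAt ℝ (fun r' => h u r') (Icc 0 R) r) ∧
  ContinuousOn (fun p : ℝ × ℝ => pdU h p.1 p.2) (Ici 0 ×ˢ Icc 0 R) ∧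
  ContinuousOn (fun p : ℝ × ℝ => pdR R h p.1 p.2) (Ici 0 ×ˢ Icc 0 R) ∧
  ∀ u ∈ Ici (0:ℝ), ∀ r ∈ Ioc (0:ℝ) R,
    pdU h u r - metricFt Λ κ h u r / 2 * pdR R h u r
      = coefG Λ κ h u r * (h u r - radAvg h u r)

/-- Radial mean of a function on `[0,r]`, with value `φ 0` at the centre. -/
def radialMean (φ : ℝ → ℝ) (r : ℝ) : ℝ :=
  if r = 0 then φ 0 else (1 / r) * ∫ s in (0:ℝ)..r, φ s

theorem radAvg_eq_radialMean (h : ℝ → ℝ → ℝ) (u r : ℝ) : radAvg h u r = radialMean (h u) r := rfl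

theorem mul_radialMean (φ : ℝ → ℝ) (r : ℝ) : r * radialMean φ r = ∫ s in (0:ℝ)..r, φ s := by
  unfold radialMean
  split_ifs with h
  · simp [h]
  · field_simp

theorem radialMean_eq_integral (φ : ℝ → ℝ) (r : ℝ) :
    radialMean φ r = ∫ t in (0:ℝ)..1, φ (t * r) := by
  unfold radialMean
  split_ifs with h
  · simp [h]
  · rw [intervalIntegral.integral_comp_mul_right _ h]
    simp

theorem intervalIntegrable_comp_mul {φ : ℝ → ℝ} {R r : ℝ} (hφ : ContinuousOn φ (Icc 0 R))
    (hr : r ∈ Icc 0 R) :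
    IntervalIntegrable (fun t => φ (t * r)) MeasureTheory.volume 0 1 := by
  apply ContinuousOn.intervalIntegrable
  rw [uIcc_of_le zero_le_one]
  refine hφ.comp (by fun_prop) fun t ht => ?_
  exact ⟨mul_nonneg ht.1 hr.1, by nlinarith [ht.1, ht.2, hr.1, hr.2]⟩

theorem abs_radialMean_sub_le {φ : ℝ → ℝ} {R a b B : ℝ} (hφ : ContinuousOn φ (Icc 0 R))
    (ha : a ∈ Icc 0 R) (hb : b ∈ Icc 0 R)
    (hB : ∀ t ∈ Icc (0:ℝ) 1, |φ (t * b) - φ (t * a)| ≤ B) :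
    |radialMean φ b - radialMean φ a| ≤ B := by
  rw [radialMean_eq_integral, radialMean_eq_integral,
    ← intervalIntegral.integral_sub (intervalIntegrable_comp_mul hφ hb)
      (intervalIntegrable_comp_mul hφ ha)]
  have := intervalIntegral.norm_integral_le_of_norm_le_const (a := (0:ℝ)) (b := 1) (C := B)
    (f := fun t => φ (t * b) - φ (t * a)) (fun t ht => by
      rw [uIoc_of_le zero_le_one] at ht
      exact hB t ⟨ht.1.le, ht.2⟩)
  simpa using this

theorem abs_sub_radialMean_le {φ : ℝ → ℝ} {R r B : ℝ} (hφ : ContinuousOn φ (Icc 0 R))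
    (hr : r ∈ Icc 0 R) (hB : ∀ s ∈ Icc 0 r, |φ r - φ s| ≤ B) :
    |φ r - radialMean φ r| ≤ B := by
  have hc : φ r = ∫ _ in (0:ℝ)..1, φ r := by simp
  rw [radialMean_eq_integral]
  nth_rewrite 1 [hc]
  rw [← intervalIntegral.integral_sub (by simp) (intervalIntegrable_comp_mul hφ hr)]
  have := intervalIntegral.norm_integral_le_of_norm_le_const (a := (0:ℝ)) (b := 1) (C := B)
    (f := fun t => φ r - φ (t * r)) (fun t ht => by
      rw [uIoc_of_le zero_le_one] at ht
      exact hB _ ⟨mul_nonneg ht.1.le hr.1, by nlinarith [ht.2, hr.1]⟩)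
  simpa using this

theorem radialMean_const_mul (c : ℝ) (φ : ℝ → ℝ) (r : ℝ) :
    radialMean (fun s => c * φ s) r = c * radialMean φ r := by
  simp [radialMean_eq_integral]

/-- `φ` varies at rate at most `L` on `[0,R]`. -/
def LipOnIcc (R L : ℝ) (φ : ℝ → ℝ) : Prop :=
  ∀ a ∈ Icc 0 R, ∀ b ∈ Icc 0 R, |φ b - φ a| ≤ L * |b - a|

theorem LipOnIcc.of_le {R L : ℝ} {φ : ℝ → ℝ}
    (h : ∀ a ∈ Icc 0 R, ∀ b ∈ Icc 0 R, a ≤ b → |φ b - φ a| ≤ L * (b - a)) :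
    LipOnIcc R L φ := by
  intro a ha b hb
  rcases le_total a b with hab | hab
  · rw [abs_of_nonneg (sub_nonneg.2 hab)]; exact h a ha b hb hab
  · rw [abs_sub_comm, abs_sub_comm b a, abs_of_nonneg (sub_nonneg.2 hab)]; exact h b hb a ha hab

theorem LipOnIcc.continuousOn {R L : ℝ} {φ : ℝ → ℝ} (h : LipOnIcc R L φ) :
    ContinuousOn φ (Icc 0 R) := by
  have : LipschitzOnWith (Real.toNNReal L) φ (Icc 0 R) := by
    apply LipschitzOnWith.of_dist_le_mul
    intro x hx y hy
    rw [Real.dist_eq, Real.dist_eq]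
    refine (h y hy x hx).trans ?_
    exact mul_le_mul_of_nonneg_right (Real.le_coe_toNNReal L) (abs_nonneg _)
  exact this.continuousOn

theorem LipOnIcc.radialMean {R L : ℝ} {φ : ℝ → ℝ} (hL : 0 ≤ L) (h : LipOnIcc R L φ) :
    LipOnIcc R L (radialMean φ) := by
  intro a ha b hb
  refine abs_radialMean_sub_le h.continuousOn ha hb fun t ht => ?_
  refine (h _ ⟨mul_nonneg ht.1 ha.1, by nlinarith [ht.1, ht.2, ha.1, ha.2]⟩ _
    ⟨mul_nonneg ht.1 hb.1, by nlinarith [ht.1, ht.2, hb.1, hb.2]⟩).trans ?_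
  rw [← mul_sub, abs_mul, abs_of_nonneg ht.1]
  exact mul_le_mul_of_nonneg_left (mul_le_of_le_one_left (abs_nonneg _) ht.2) hL

theorem LipOnIcc.abs_sub_radialMean_le {R L r : ℝ} {φ : ℝ → ℝ} (hL : 0 ≤ L)
    (h : LipOnIcc R L φ) (hr : r ∈ Icc 0 R) : |φ r - _root_.radialMean φ r| ≤ L * r := by
  refine _root_.abs_sub_radialMean_le h.continuousOn hr fun s hs => ?_
  refine (h s ⟨hs.1, hs.2.trans hr.2⟩ r hr).trans ?_
  rw [abs_of_nonneg (sub_nonneg.2 hs.2)]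
  exact mul_le_mul_of_nonneg_left (by linarith [hs.1]) hL

/-- The integrand in the exponent of `metricF`. -/
def fluxDensity (φ : ℝ → ℝ) (s : ℝ) : ℝ := (φ s - radialMean φ s) ^ 2 / s

theorem fluxDensity_nonneg (φ : ℝ → ℝ) {s : ℝ} (hs : 0 ≤ s) : 0 ≤ fluxDensity φ s :=
  div_nonneg (sq_nonneg _) hs

theorem LipOnIcc.fluxDensity_le {R η s : ℝ} {φ : ℝ → ℝ} (hη : 0 ≤ η) (h : LipOnIcc R η φ)
    (hs : s ∈ Icc 0 R) : fluxDensity φ s ≤ η ^ 2 * s := by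
  have h1 := h.abs_sub_radialMean_le hη hs
  rcases hs.1.eq_or_lt with h0 | h0
  · simp [fluxDensity, ← h0]
  · rw [fluxDensity, div_le_iff₀ h0]
    have := sq_le_sq' (by linarith [abs_nonneg (φ s - _root_.radialMean φ s)]) h1
    rw [sq_abs] at this
    linarith [this, show (η * s) ^ 2 = η ^ 2 * s * s by ring]

theorem LipOnIcc.continuousOn_fluxDensity {R η : ℝ} {φ : ℝ → ℝ} (hη : 0 ≤ η)
    (h : LipOnIcc R η φ) : ContinuousOn (fluxDensity φ) (Icc 0 R) := by
  intro s hs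
  rcases hs.1.eq_or_lt with h0 | h0
  · subst h0
    have hz : fluxDensity φ 0 = 0 := by simp [fluxDensity]
    rw [ContinuousWithinAt, hz]
    refine tendsto_of_tendsto_of_tendsto_of_le_of_le' (g := fun _ => (0:ℝ))
      (h := fun s => η ^ 2 * s) tendsto_const_nhds ?_ ?_ ?_
    · have : ContinuousWithinAt (fun s : ℝ => η ^ 2 * s) (Icc 0 R) 0 := by fun_prop
      simpa [ContinuousWithinAt] using this
    · filter_upwards [self_mem_nhdsWithin] with x hx using fluxDensity_nonneg φ hx.1
    · filter_upwards [self_mem_nhdsWithin] with x hx using h.fluxDensity_le hη hx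
  · exact (((h.continuousOn s hs).sub ((h.radialMean hη).continuousOn s hs)).pow 2).div
      continuousWithinAt_id h0.ne'

theorem exp_sub_exp_le {x y : ℝ} : Real.exp x - Real.exp y ≤ Real.exp x * (x - y) := by
  have h1 := Real.add_one_le_exp (y - x)
  have h2 : Real.exp y = Real.exp x * Real.exp (y - x) := by rw [← Real.exp_add]; ring_nf
  rw [h2]
  nlinarith [Real.exp_pos x]

theorem metricF_zero (κ : ℝ) (h : ℝ → ℝ → ℝ) (u : ℝ) : metricF κ h u 0 = 1 := by
  simp [metricF]

theorem metricF_eq (κ : ℝ) (h : ℝ → ℝ → ℝ) (u r : ℝ) :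
    metricF κ h u r = Real.exp ((κ / 2) * ∫ s in (0:ℝ)..r, fluxDensity (h u) s) := rfl

theorem metricF_lip {κ R η B u : ℝ} {h : ℝ → ℝ → ℝ} (hκ : 0 < κ) (hη : 0 ≤ η)
    (hηB : η ≤ B) (hL : LipOnIcc R η (h u)) :
    LipOnIcc R (Real.exp (κ / 2 * (B ^ 2 * R * R)) * (κ / 2) * R * η ^ 2) (metricF κ h u) := by
  apply LipOnIcc.of_le
  intro a ha b hb hab
  have hR : 0 ≤ R := ha.1.trans ha.2
  have hbound : ∀ x y, x ∈ Icc 0 R → y ∈ Icc 0 R → x ≤ y →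
      0 ≤ (∫ s in x..y, fluxDensity (h u) s) ∧
      (∫ s in x..y, fluxDensity (h u) s) ≤ η ^ 2 * R * (y - x) := by
    intro x y hx hy hxy
    refine ⟨intervalIntegral.integral_nonneg hxy fun s hs =>
      fluxDensity_nonneg _ (hx.1.trans hs.1), ?_⟩
    have := intervalIntegral.norm_integral_le_of_norm_le_const (a := x) (b := y)
      (C := η ^ 2 * R) (f := fluxDensity (h u)) (fun s hs => by
        rw [uIoc_of_le hxy] at hs
        have hs0 : 0 ≤ s := hx.1.trans hs.1.le
        rw [Real.norm_of_nonneg (fluxDensity_nonneg _ hs0)]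
        refine (hL.fluxDensity_le hη ⟨hs0, hs.2.trans hy.2⟩).trans ?_
        exact mul_le_mul_of_nonneg_left (hs.2.trans hy.2) (sq_nonneg η))
    rw [abs_of_nonneg (sub_nonneg.2 hxy)] at this
    exact (le_abs_self _).trans this
  have hint : ∀ x y, x ∈ Icc 0 R → y ∈ Icc 0 R →
      IntervalIntegrable (fluxDensity (h u)) MeasureTheory.volume x y := by
    intro x y hx hy
    exact ((hL.continuousOn_fluxDensity hη).mono (ordConnected_Icc.uIcc_subset hx hy)).intervalIntegrable
  have h0 : (0:ℝ) ∈ Icc 0 R := ⟨le_rfl, hR⟩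
  have hadd := intervalIntegral.integral_add_adjacent_intervals (hint 0 a h0 ha) (hint a b ha hb)
  obtain ⟨hd0, hd1⟩ := hbound a b ha hb hab
  obtain ⟨-, hb1⟩ := hbound 0 b h0 hb hb.1
  rw [metricF_eq, metricF_eq, abs_of_nonneg (sub_nonneg.2 (Real.exp_le_exp.2 (by
    rw [← hadd]; nlinarith)))]
  refine exp_sub_exp_le.trans ?_
  have hηB2 : η ^ 2 ≤ B ^ 2 := pow_le_pow_left₀ hη hηB 2
  have hE : Real.exp (κ / 2 * ∫ s in (0:ℝ)..b, fluxDensity (h u) s)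
      ≤ Real.exp (κ / 2 * (B ^ 2 * R * R)) := by
    apply Real.exp_le_exp.2
    refine mul_le_mul_of_nonneg_left (hb1.trans ?_) (by positivity)
    calc η ^ 2 * R * (b - 0) ≤ η ^ 2 * R * R := by
          refine mul_le_mul_of_nonneg_left (by linarith [hb.2]) (by positivity)
      _ ≤ B ^ 2 * R * R := by gcongr
  calc _ ≤ Real.exp (κ / 2 * (B ^ 2 * R * R)) * (κ / 2 * (η ^ 2 * R * (b - a))) := by
        refine mul_le_mul hE ?_ ?_ (Real.exp_pos _).le
        · rw [← hadd]; nlinarith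
        · rw [← hadd]; nlinarith
    _ = _ := by ring

/-- The deviation `(f - 1)(1 - Λ r²)` whose radial mean is the deviation of `f̃`. -/
def metricDefect (Λ κ : ℝ) (h : ℝ → ℝ → ℝ) (u r : ℝ) : ℝ :=
  (metricF κ h u r - 1) * (1 - Λ * r ^ 2)

theorem metricDefect_zero (Λ κ : ℝ) (h : ℝ → ℝ → ℝ) (u : ℝ) : metricDefect Λ κ h u 0 = 0 := by
  simp [metricDefect, metricF_zero]

theorem abs_metricF_sub_one_le {κ R L u r : ℝ} {h : ℝ → ℝ → ℝ} (hr : r ∈ Icc 0 R)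
    (hL : LipOnIcc R L (metricF κ h u)) : |metricF κ h u r - 1| ≤ L * r := by
  have := hL 0 ⟨le_rfl, hr.1.trans hr.2⟩ r hr
  rwa [metricF_zero, sub_zero, abs_of_nonneg hr.1] at this

theorem metricDefect_lip {Λ κ R L u : ℝ} {h : ℝ → ℝ → ℝ} (hΛ : 0 < Λ) (hL0 : 0 ≤ L)
    (hL : LipOnIcc R L (metricF κ h u)) :
    LipOnIcc R (L * (1 + 3 * Λ * R ^ 2)) (metricDefect Λ κ h u) := by
  apply LipOnIcc.of_le
  intro a ha b hb hab
  have hR : 0 ≤ R := ha.1.trans ha.2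
  have h1 := hL a ha b hb
  rw [abs_of_nonneg (sub_nonneg.2 hab)] at h1
  have h2 := abs_metricF_sub_one_le ha hL
  have e : metricDefect Λ κ h u b - metricDefect Λ κ h u a
      = (metricF κ h u b - metricF κ h u a) * (1 - Λ * b ^ 2)
        - (metricF κ h u a - 1) * (Λ * ((b + a) * (b - a))) := by
    unfold metricDefect; ring
  have hd : 0 ≤ b - a := sub_nonneg.2 hab
  have h3 : |1 - Λ * b ^ 2| ≤ 1 + Λ * R ^ 2 := by
    have : b ^ 2 ≤ R ^ 2 := pow_le_pow_left₀ hb.1 hb.2 2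
    rw [abs_le]; constructor <;> nlinarith [sq_nonneg b, sq_nonneg R]
  have h4 : |Λ * ((b + a) * (b - a))| ≤ Λ * (2 * R * (b - a)) := by
    have h0 : 0 ≤ b + a := add_nonneg hb.1 ha.1
    rw [abs_of_nonneg (by positivity)]
    have : b + a ≤ 2 * R := by linarith [ha.2, hb.2]
    gcongr
  rw [e]
  refine (abs_sub _ _).trans ?_
  rw [abs_mul, abs_mul]
  calc _ ≤ (L * (b - a)) * (1 + Λ * R ^ 2) + (L * R) * (Λ * (2 * R * (b - a))) := by
        gcongr
        exact h2.trans (mul_le_mul_of_nonneg_left ha.2 hL0)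
    _ = _ := by ring

theorem metricFt_eq {Λ κ R L u r : ℝ} {h : ℝ → ℝ → ℝ} (hr : r ∈ Icc 0 R)
    (hL : LipOnIcc R L (metricF κ h u)) :
    metricFt Λ κ h u r = 1 - Λ / 3 * r ^ 2 + radialMean (metricDefect Λ κ h u) r := by
  unfold metricFt radialMean
  split_ifs with h0
  · simp [h0, metricDefect_zero]
  have hc : ContinuousOn (metricF κ h u) (uIcc 0 r) :=
    hL.continuousOn.mono (by rw [uIcc_of_le hr.1]; exact Icc_subset_Icc_right hr.2)
  have i1 : IntervalIntegrable (metricF κ h u) MeasureTheory.volume 0 r := hc.intervalIntegrable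
  have i2 : IntervalIntegrable (fun s => Λ * (metricF κ h u s * s ^ 2)) MeasureTheory.volume 0 r :=
    ContinuousOn.intervalIntegrable (by fun_prop)
  have i3 : IntervalIntegrable (fun s => 1 - Λ * s ^ 2) MeasureTheory.volume 0 r :=
    ContinuousOn.intervalIntegrable (by fun_prop)
  have e : (∫ s in (0:ℝ)..r, metricDefect Λ κ h u s) = (∫ s in (0:ℝ)..r, metricF κ h u s)
      - Λ * (∫ s in (0:ℝ)..r, metricF κ h u s * s ^ 2) - (r - Λ * r ^ 3 / 3) := by
    have e1 : (∫ s in (0:ℝ)..r, (1 - Λ * s ^ 2)) = r - Λ * r ^ 3 / 3 := by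
      rw [intervalIntegral.integral_sub (by simp) (ContinuousOn.intervalIntegrable (by fun_prop)),
        intervalIntegral.integral_const_mul, integral_pow]
      norm_num
      ring
    rw [← e1, ← intervalIntegral.integral_const_mul, ← intervalIntegral.integral_sub i1 i2,
      ← intervalIntegral.integral_sub (i1.sub i2) i3]
    congr 1; ext s; unfold metricDefect; ring
  rw [e]
  field_simp
  ring

theorem two_mul_coefG {Λ κ R L u r : ℝ} {h : ℝ → ℝ → ℝ} (hr : r ∈ Icc 0 R)
    (hL : LipOnIcc R L (metricF κ h u)) :
    2 * r * (coefG Λ κ h u r + Λ / 3 * r)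
      = metricDefect Λ κ h u r - radialMean (metricDefect Λ κ h u) r := by
  have e := metricFt_eq (Λ := Λ) hr hL
  rcases eq_or_ne r 0 with h0 | h0
  · simp [h0, radialMean]
  · unfold coefG
    rw [e]
    field_simp
    unfold metricDefect
    ring

theorem abs_coefG_le {Λ κ R L M u r : ℝ} {h : ℝ → ℝ → ℝ} (hr : r ∈ Icc 0 R)
    (hL : LipOnIcc R L (metricF κ h u)) (hM0 : 0 ≤ M)
    (hM : LipOnIcc R M (metricDefect Λ κ h u)) : |coefG Λ κ h u r + Λ / 3 * r| ≤ M := by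
  rcases hr.1.eq_or_lt with h0 | h0
  · simp [← h0, coefG, hM0]
  have h1 := hM.abs_sub_radialMean_le hM0 hr
  rw [← two_mul_coefG hr hL, abs_mul, abs_of_pos (by linarith : 0 < 2 * r)] at h1
  nlinarith [abs_nonneg (coefG Λ κ h u r + Λ / 3 * r)]

theorem hasDerivWithinAt_nonneg_of_max {ψ : ℝ → ℝ} {d a x : ℝ} (hax : a < x)
    (hd : HasDerivWithinAt ψ d (Icc a x) x) (h : ∀ y ∈ Ico a x, ψ y ≤ ψ x) : 0 ≤ d := by
  have hd' : HasDerivWithinAt ψ d (Ico a x) x := hd.mono Ico_subset_Icc_self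
  rw [hasDerivWithinAt_iff_tendsto_slope' (by simp)] at hd'
  have : (nhdsWithin x (Ico a x)).NeBot := by
    rw [← mem_closure_iff_nhdsWithin_neBot, closure_Ico hax.ne]
    exact right_mem_Icc.2 hax.le
  refine ge_of_tendsto hd' ?_
  filter_upwards [self_mem_nhdsWithin] with y hy
  rw [slope_def_field]
  exact div_nonneg_of_nonpos (by linarith [h y hy]) (by linarith [hy.2])

theorem hasDerivWithinAt_nonpos_of_max {ψ : ℝ → ℝ} {d b x : ℝ} (hxb : x < b)
    (hd : HasDerivWithinAt ψ d (Icc x b) x) (h : ∀ y ∈ Ioc x b, ψ y ≤ ψ x) : d ≤ 0 := by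
  have hd' : HasDerivWithinAt ψ d (Ioc x b) x := hd.mono Ioc_subset_Icc_self
  rw [hasDerivWithinAt_iff_tendsto_slope' (by simp)] at hd'
  have : (nhdsWithin x (Ioc x b)).NeBot := by
    rw [← mem_closure_iff_nhdsWithin_neBot, closure_Ioc hxb.ne]
    exact left_mem_Icc.2 hxb.le
  refine le_of_tendsto hd' ?_
  filter_upwards [self_mem_nhdsWithin] with y hy
  rw [slope_def_field]
  exact div_nonpos_of_nonpos_of_nonneg (by linarith [h y hy]) (by linarith [hy.1])

/-- The factor `1 / (1 + H r)`. -/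
def invShift (H r : ℝ) : ℝ := (1 + H * r)⁻¹

/-- The weighted radial distance, a primitive of `(1 + H r)⁻⁴`. -/
def weightedRadius (H r : ℝ) : ℝ := -(invShift H r) ^ 3 / (3 * H)

/-- A primitive of `r (1 + H r)⁻⁴`. -/
def weightedMoment (H r : ℝ) : ℝ :=
  (-(invShift H r) ^ 2 / 2 + (invShift H r) ^ 3 / 3) / H ^ 2

section Weight

variable {H R a b r : ℝ}

theorem shift_pos (hH : 0 < H) (hr : 0 ≤ r) : 0 < 1 + H * r := by positivity

theorem invShift_pos (hH : 0 < H) (hr : 0 ≤ r) : 0 < invShift H r :=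
  inv_pos.2 (shift_pos hH hr)

theorem invShift_le_one (hH : 0 < H) (hr : 0 ≤ r) : invShift H r ≤ 1 :=
  inv_le_one_of_one_le₀ (by nlinarith [mul_nonneg hH.le hr])

theorem invShift_anti (hH : 0 < H) (ha : 0 ≤ a) (hab : a ≤ b) : invShift H b ≤ invShift H a :=
  inv_anti₀ (shift_pos hH ha) (by nlinarith)

theorem invShift_sub (hH : 0 < H) (ha : 0 ≤ a) (hb : 0 ≤ b) :
    invShift H a - invShift H b = H * (b - a) * (invShift H a * invShift H b) := by
  have := shift_pos hH ha
  have := shift_pos hH hb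
  unfold invShift
  field_simp
  ring

theorem weightedRadius_sub (hH : 0 < H) (ha : 0 ≤ a) (hb : 0 ≤ b) :
    weightedRadius H b - weightedRadius H a = (b - a) * (invShift H a * invShift H b *
      (invShift H a ^ 2 + invShift H a * invShift H b + invShift H b ^ 2) / 3) := by
  have h := invShift_sub hH ha hb
  unfold weightedRadius
  field_simp
  linear_combination (invShift H a ^ 2 + invShift H a * invShift H b + invShift H b ^ 2) * h

theorem weightedRadius_sub_le (hH : 0 < H) (ha : 0 ≤ a) (hab : a ≤ b) :
    weightedRadius H b - weightedRadius H a ≤ b - a := by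
  have hb := ha.trans hab
  rw [weightedRadius_sub hH ha hb]
  refine mul_le_of_le_one_right (by linarith) ?_
  have h1 := invShift_le_one hH ha
  have h2 := invShift_le_one hH hb
  have h3 := invShift_pos hH ha
  have h4 := invShift_pos hH hb
  have h5 : invShift H a * invShift H b ≤ 1 := mul_le_one₀ h1 h4.le h2
  have h6 : invShift H a ^ 2 ≤ 1 := pow_le_one₀ h3.le h1
  have h7 : invShift H b ^ 2 ≤ 1 := pow_le_one₀ h4.le h2
  have h8 : invShift H a * invShift H b *
      (invShift H a ^ 2 + invShift H a * invShift H b + invShift H b ^ 2) ≤ 1 * 3 := by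
    apply mul_le_mul h5 (by linarith) (by positivity) zero_le_one
  linarith

theorem le_weightedRadius_sub (hH : 0 < H) (ha : 0 ≤ a) (hab : a ≤ b) (hbR : b ≤ R) :
    invShift H R ^ 4 * (b - a) ≤ weightedRadius H b - weightedRadius H a := by
  have hb := ha.trans hab
  rw [weightedRadius_sub hH ha hb, mul_comm]
  refine mul_le_mul_of_nonneg_left ?_ (by linarith)
  have h1 := invShift_anti hH ha (hab.trans hbR)
  have h2 := invShift_anti hH hb hbR
  have h3 := invShift_pos hH (hb.trans hbR)
  have h4 := invShift_pos hH ha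
  have h5 := invShift_pos hH hb
  calc invShift H R ^ 4 = invShift H R * invShift H R *
        (invShift H R ^ 2 + invShift H R * invShift H R + invShift H R ^ 2) / 3 := by ring
    _ ≤ _ := by gcongr

theorem abs_invShift_pow_four_sub_le (hH : 0 < H) (ha : 0 ≤ a) (hab : a ≤ b) :
    |invShift H b ^ 4 - invShift H a ^ 4| ≤ 4 * H * (b - a) := by
  have hb := ha.trans hab
  have h := invShift_sub hH ha hb
  have h0 := invShift_anti hH ha hab
  have h1 := invShift_le_one hH ha
  have h2 := invShift_le_one hH hb
  have h3 := invShift_pos hH ha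
  have h4 := invShift_pos hH hb
  rw [abs_sub_comm, abs_of_nonneg (sub_nonneg.2 (pow_le_pow_left₀ h4.le h0 4))]
  have e : invShift H a ^ 4 - invShift H b ^ 4 = (H * (b - a)) * ((invShift H a * invShift H b) *
      ((invShift H a + invShift H b) * (invShift H a ^ 2 + invShift H b ^ 2))) := by
    linear_combination ((invShift H a + invShift H b) * (invShift H a ^ 2 + invShift H b ^ 2)) * h
  have h6 : invShift H a ^ 2 ≤ 1 := pow_le_one₀ h3.le h1
  have h7 : invShift H b ^ 2 ≤ 1 := pow_le_one₀ h4.le h2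
  have h8 : (invShift H a * invShift H b) *
      ((invShift H a + invShift H b) * (invShift H a ^ 2 + invShift H b ^ 2)) ≤ 1 * (2 * 2) := by
    apply mul_le_mul (mul_le_one₀ h1 h4.le h2) _ (by positivity) zero_le_one
    apply mul_le_mul (by linarith) (by linarith) (by positivity) (by norm_num)
  rw [e]
  have : 0 ≤ H * (b - a) := mul_nonneg hH.le (by linarith)
  nlinarith

theorem hasDerivAt_invShift (hH : 0 < H) (hr : 0 ≤ r) :
    HasDerivAt (invShift H) (-H * invShift H r ^ 2) r := by
  have h := shift_pos hH hr
  have h1 : HasDerivAt (fun x : ℝ => 1 + H * x) H r := by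
    simpa using ((hasDerivAt_id r).const_mul H).const_add 1
  refine (h1.fun_inv h.ne').congr_deriv ?_
  unfold invShift
  field_simp

theorem hasDerivAt_weightedRadius (hH : 0 < H) (hr : 0 ≤ r) :
    HasDerivAt (weightedRadius H) (invShift H r ^ 4) r := by
  refine ((((hasDerivAt_invShift hH hr).pow 3).neg).div_const (3 * H)).congr_deriv ?_
  field_simp
  norm_num
  ring

theorem continuousOn_weightedRadius (hH : 0 < H) : ContinuousOn (weightedRadius H) (Ici 0) :=
  fun _ hr => (hasDerivAt_weightedRadius hH hr).continuousAt.continuousWithinAt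

theorem hasDerivAt_weightedMoment (hH : 0 < H) (hr : 0 ≤ r) :
    HasDerivAt (weightedMoment H) (r * invShift H r ^ 4) r := by
  have h := hasDerivAt_invShift hH hr
  have h2 := shift_pos hH hr
  refine (((((h.pow 2).neg).div_const 2).add
    ((h.pow 3).div_const 3)).div_const (H ^ 2)).congr_deriv ?_
  have e : (1 + H * r) * invShift H r = 1 := mul_inv_cancel₀ h2.ne'
  field_simp
  norm_num
  linear_combination -6 * invShift H r ^ 3 * e

theorem integral_weightedRadius (hH : 0 < H) (ha : 0 ≤ a) (hab : a ≤ b) :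
    ∫ s in a..b, weightedRadius H s = b * weightedRadius H b - a * weightedRadius H a
      - (weightedMoment H b - weightedMoment H a) := by
  have := intervalIntegral.integral_eq_sub_of_hasDerivAt (a := a) (b := b)
    (f := fun r => r * weightedRadius H r - weightedMoment H r) (f' := weightedRadius H) ?_ ?_
  · rw [this]; ring
  · intro x hx
    rw [uIcc_of_le hab] at hx
    have hx0 := ha.trans hx.1
    refine (((hasDerivAt_id x).mul (hasDerivAt_weightedRadius hH hx0)).sub
      (hasDerivAt_weightedMoment hH hx0)).congr_deriv ?_
    simp
  · refine ((continuousOn_weightedRadius hH).mono ?_).intervalIntegrable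
    rw [uIcc_of_le hab]
    exact fun x hx => ha.trans hx.1

/-- The weight diagonalises the linearised flow: its decay rate is exactly `2H`. -/
theorem linear_rate_identity (hH : 0 < H) (hr : 0 ≤ r) :
    (1 - H ^ 2 * r ^ 2) * invShift H r ^ 4 / 2 - H ^ 2 * weightedMoment H r
      = -2 * H * weightedRadius H r := by
  have h := shift_pos hH hr
  unfold weightedMoment weightedRadius invShift
  field_simp
  ring

end Weight

section Touching

variable {H R A γ r₁ r₂ : ℝ} {φ p : ℝ → ℝ}

theorem transport_le_of_touching {Ft : ℝ → ℝ} (hH : 0 < H)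
    (hd : ∀ r ∈ Icc 0 R, HasDerivWithinAt φ (p r) (Icc 0 R) r)
    (hF0 : 0 ≤ Ft 0) (hFR : Ft R ≤ 0) (h1 : 0 ≤ r₁) (h12 : r₁ < r₂) (h2 : r₂ ≤ R)
    (hmod : ∀ a ∈ Icc 0 R, ∀ b ∈ Icc 0 R, a ≤ b →
      |φ b - φ a| ≤ A * (weightedRadius H b - weightedRadius H a) + γ)
    (ht : φ r₂ - φ r₁ = A * (weightedRadius H r₂ - weightedRadius H r₁) + γ) :
    Ft r₂ / 2 * p r₂ - Ft r₁ / 2 * p r₁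
      ≤ A / 2 * (Ft r₂ * invShift H r₂ ^ 4 - Ft r₁ * invShift H r₁ ^ 4) := by
  have m1 : r₁ ∈ Icc 0 R := ⟨h1, h12.le.trans h2⟩
  have m2 : r₂ ∈ Icc 0 R := ⟨h1.trans h12.le, h2⟩
  have hψ : ∀ r ∈ Icc 0 R, HasDerivWithinAt (fun r => φ r - A * weightedRadius H r)
      (p r - A * invShift H r ^ 4) (Icc 0 R) r := fun r hr =>
    (hd r hr).sub ((hasDerivAt_weightedRadius hH hr.1).hasDerivWithinAt.const_mul A)
  have a2 : 0 ≤ p r₂ - A * invShift H r₂ ^ 4 := by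
    refine hasDerivWithinAt_nonneg_of_max h12 ((hψ r₂ m2).mono (Icc_subset_Icc h1 h2)) ?_
    intro y hy
    have := (abs_le.1 (hmod r₁ m1 y ⟨h1.trans hy.1, hy.2.le.trans h2⟩ hy.1)).2
    linarith
  have b2 : r₂ < R → p r₂ - A * invShift H r₂ ^ 4 ≤ 0 := by
    intro hlt
    refine hasDerivWithinAt_nonpos_of_max hlt
      ((hψ r₂ m2).mono (Icc_subset_Icc_left m2.1)) ?_
    intro y hy
    have := (abs_le.1 (hmod r₁ m1 y ⟨m2.1.trans hy.1.le, hy.2⟩ (h12.le.trans hy.1.le))).2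
    linarith
  have a1 : 0 ≤ p r₁ - A * invShift H r₁ ^ 4 := by
    have := hasDerivWithinAt_nonpos_of_max h12
      (((hψ r₁ m1).mono (Icc_subset_Icc h1 h2)).neg) ?_
    · linarith
    intro y hy
    have := (abs_le.1 (hmod y ⟨h1.trans hy.1.le, hy.2.trans h2⟩ r₂ m2 hy.2)).2
    simp only [Pi.neg_apply]
    linarith
  have b1 : 0 < r₁ → p r₁ - A * invShift H r₁ ^ 4 ≤ 0 := by
    intro hlt
    have := hasDerivWithinAt_nonneg_of_max hlt
      (((hψ r₁ m1).mono (Icc_subset_Icc_right m1.2)).neg) ?_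
    · linarith
    intro y hy
    have := (abs_le.1 (hmod y ⟨hy.1, hy.2.le.trans m1.2⟩ r₂ m2 (hy.2.le.trans h12.le))).2
    simp only [Pi.neg_apply]
    linarith
  have c2 : Ft r₂ * (p r₂ - A * invShift H r₂ ^ 4) ≤ 0 := by
    rcases h2.eq_or_lt with e | hlt
    · rw [← e] at hFR; exact mul_nonpos_of_nonpos_of_nonneg hFR a2
    · rw [le_antisymm (b2 hlt) a2, mul_zero]
  have c1 : 0 ≤ Ft r₁ * (p r₁ - A * invShift H r₁ ^ 4) := by
    rcases h1.eq_or_lt with e | hlt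
    · rw [← e] at a1 ⊢; exact mul_nonneg hF0 a1
    · rw [le_antisymm (b1 hlt) a1, mul_zero]
  linarith

theorem le_moment_of_touching (hH : 0 < H) (hφ : ContinuousOn φ (Icc 0 R)) (hγ : 0 ≤ γ)
    (h1 : 0 ≤ r₁) (h12 : r₁ < r₂) (h2 : r₂ ≤ R)
    (hmod : ∀ a ∈ Icc 0 R, ∀ b ∈ Icc 0 R, a ≤ b →
      |φ b - φ a| ≤ A * (weightedRadius H b - weightedRadius H a) + γ)
    (ht : φ r₂ - φ r₁ = A * (weightedRadius H r₂ - weightedRadius H r₁) + γ) :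
    A * (weightedMoment H r₂ - weightedMoment H r₁)
      ≤ r₂ * (φ r₂ - radialMean φ r₂) - r₁ * (φ r₁ - radialMean φ r₁) := by
  have m1 : r₁ ∈ Icc 0 R := ⟨h1, h12.le.trans h2⟩
  have m2 : r₂ ∈ Icc 0 R := ⟨h1.trans h12.le, h2⟩
  have h0 : (0:ℝ) ∈ Icc 0 R := ⟨le_rfl, m1.1.trans m1.2⟩
  have hint : ∀ x y, x ∈ Icc 0 R → y ∈ Icc 0 R →
      IntervalIntegrable φ MeasureTheory.volume x y := fun x y hx hy =>
    (hφ.mono (ordConnected_Icc.uIcc_subset hx hy)).intervalIntegrable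
  have hadd := intervalIntegral.integral_add_adjacent_intervals (hint 0 r₁ h0 m1) (hint r₁ r₂ m1 m2)
  have hw : IntervalIntegrable (weightedRadius H) MeasureTheory.volume r₁ r₂ := by
    refine ((continuousOn_weightedRadius hH).mono ?_).intervalIntegrable
    rw [uIcc_of_le h12.le]
    exact fun x hx => h1.trans hx.1
  have hle : (∫ s in r₁..r₂, A * (weightedRadius H r₂ - weightedRadius H s))
      ≤ ∫ s in r₁..r₂, (φ r₂ - φ s) := by
    apply intervalIntegral.integral_mono_on h12.le
    · exact (((by simp : IntervalIntegrable (fun _ : ℝ => weightedRadius H r₂) _ _ _)).sub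
        hw).const_mul A
    · exact (by simp : IntervalIntegrable (fun _ : ℝ => φ r₂) _ _ _).sub (hint r₁ r₂ m1 m2)
    · intro s hs
      have := (abs_le.1 (hmod r₁ m1 s ⟨h1.trans hs.1, hs.2.trans h2⟩ hs.1)).2
      linarith
  rw [intervalIntegral.integral_const_mul, intervalIntegral.integral_sub (by simp) hw,
    intervalIntegral.integral_sub (by simp) (hint r₁ r₂ m1 m2),
    integral_weightedRadius hH h1 h12.le] at hle
  simp only [intervalIntegral.integral_const, smul_eq_mul] at hle
  rw [mul_sub r₂, mul_sub r₁, mul_radialMean, mul_radialMean, ← hadd]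
  have : r₁ * (φ r₂ - φ r₁) = r₁ * (A * (weightedRadius H r₂ - weightedRadius H r₁) + γ) := by
    rw [ht]
  have : 0 ≤ r₁ * γ := mul_nonneg h1 hγ
  linarith

theorem source_gap_le_of_modulus {L : ℝ} {m g : ℝ → ℝ} (hH : 0 < H) (hA : 0 ≤ A) (hL : 0 ≤ L)
    (hφ : ContinuousOn φ (Icc 0 R)) (hγ : 0 ≤ γ) (h1 : 0 ≤ r₁) (h12 : r₁ < r₂) (h2 : r₂ ≤ R)
    (hmod : ∀ a ∈ Icc 0 R, ∀ b ∈ Icc 0 R, a ≤ b →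
      |φ b - φ a| ≤ A * (weightedRadius H b - weightedRadius H a) + γ)
    (hm : LipOnIcc R L m) (hg : ∀ r ∈ Icc 0 R, 2 * r * g r = m r - radialMean m r)
    (hgL : ∀ r ∈ Icc 0 R, |g r| ≤ L) :
    g r₂ * (φ r₂ - radialMean φ r₂) - g r₁ * (φ r₁ - radialMean φ r₁)
      ≤ 4 * L * A * (r₂ - r₁) + 4 * L * γ := by
  have m1 : r₁ ∈ Icc 0 R := ⟨h1, h12.le.trans h2⟩
  have m2 : r₂ ∈ Icc 0 R := ⟨h1.trans h12.le, h2⟩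
  have hmod' : ∀ a ∈ Icc 0 R, ∀ b ∈ Icc 0 R, a ≤ b → |φ b - φ a| ≤ A * (b - a) + γ := by
    intro a ha b hb hab
    refine (hmod a ha b hb hab).trans ?_
    have := mul_le_mul_of_nonneg_left (weightedRadius_sub_le hH ha.1 hab) hA
    linarith
  have hk1 : |φ r₁ - radialMean φ r₁| ≤ A * r₁ + γ := by
    refine abs_sub_radialMean_le hφ m1 fun s hs => ?_
    refine (hmod' s ⟨hs.1, hs.2.trans m1.2⟩ r₁ m1 hs.2).trans ?_
    nlinarith [hs.1]
  have hmean : |radialMean φ r₂ - radialMean φ r₁| ≤ A * (r₂ - r₁) + γ := by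
    refine abs_radialMean_sub_le hφ m1 m2 fun t ht => ?_
    have hle : t * r₁ ≤ t * r₂ := mul_le_mul_of_nonneg_left h12.le ht.1
    refine (hmod' _ ⟨mul_nonneg ht.1 m1.1, by nlinarith [ht.2, m1.1, m1.2]⟩ _
      ⟨mul_nonneg ht.1 m2.1, by nlinarith [ht.2, m2.1, m2.2]⟩ hle).trans ?_
    have : t * r₂ - t * r₁ ≤ r₂ - r₁ := by nlinarith [ht.2]
    have := mul_le_mul_of_nonneg_left this hA
    linarith
  have hkd : |(φ r₂ - radialMean φ r₂) - (φ r₁ - radialMean φ r₁)|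
      ≤ 2 * (A * (r₂ - r₁) + γ) := by
    have e : (φ r₂ - radialMean φ r₂) - (φ r₁ - radialMean φ r₁)
      = (φ r₂ - φ r₁) - (radialMean φ r₂ - radialMean φ r₁) := by ring
    rw [e]
    refine (abs_sub _ _).trans ?_
    linarith [hmod' r₁ m1 r₂ m2 h12.le]
  have hgd : r₁ * |g r₂ - g r₁| ≤ 2 * L * (r₂ - r₁) := by
    have e : 2 * (r₁ * (g r₂ - g r₁)) = (m r₂ - m r₁) - (radialMean m r₂ - radialMean m r₁)
        - 2 * (r₂ - r₁) * g r₂ := by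
      linear_combination hg r₂ m2 - hg r₁ m1
    have e1 := hm r₁ m1 r₂ m2
    have e2 := hm.radialMean hL r₁ m1 r₂ m2
    have hpos : 0 < r₂ - r₁ := sub_pos.2 h12
    rw [abs_of_pos hpos] at e1 e2
    have e3 : |2 * (r₂ - r₁) * g r₂| ≤ 2 * (r₂ - r₁) * L := by
      rw [abs_mul, abs_of_pos (by linarith : 0 < 2 * (r₂ - r₁))]
      exact mul_le_mul_of_nonneg_left (hgL r₂ m2) (by linarith)
    have e4 : |2 * (r₁ * (g r₂ - g r₁))| = 2 * (r₁ * |g r₂ - g r₁|) := by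
      rw [abs_mul, abs_mul, abs_of_nonneg h1, abs_two]
    rw [← mul_le_mul_iff_right₀ (two_pos (α := ℝ)), ← e4, e]
    have := abs_sub (m r₂ - m r₁ - (radialMean m r₂ - radialMean m r₁)) (2 * (r₂ - r₁) * g r₂)
    have := abs_sub (m r₂ - m r₁) (radialMean m r₂ - radialMean m r₁)
    linarith
  have hgd' : |g r₂ - g r₁| ≤ 2 * L := by
    have := abs_sub (g r₂) (g r₁)
    linarith [hgL r₁ m1, hgL r₂ m2]
  have e : g r₂ * (φ r₂ - radialMean φ r₂) - g r₁ * (φ r₁ - radialMean φ r₁)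
      = g r₂ * ((φ r₂ - radialMean φ r₂) - (φ r₁ - radialMean φ r₁))
        + (g r₂ - g r₁) * (φ r₁ - radialMean φ r₁) := by ring
  rw [e]
  have t1 : g r₂ * ((φ r₂ - radialMean φ r₂) - (φ r₁ - radialMean φ r₁))
      ≤ L * (2 * (A * (r₂ - r₁) + γ)) := by
    refine (le_abs_self _).trans ?_
    rw [abs_mul]
    exact mul_le_mul (hgL r₂ m2) hkd (abs_nonneg _) hL
  have t2 : (g r₂ - g r₁) * (φ r₁ - radialMean φ r₁)
      ≤ A * (2 * L * (r₂ - r₁)) + 2 * L * γ := by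
    refine (le_abs_self _).trans ?_
    rw [abs_mul]
    calc |g r₂ - g r₁| * |φ r₁ - radialMean φ r₁| ≤ |g r₂ - g r₁| * (A * r₁ + γ) :=
          mul_le_mul_of_nonneg_left hk1 (abs_nonneg _)
      _ = A * (r₁ * |g r₂ - g r₁|) + |g r₂ - g r₁| * γ := by ring
      _ ≤ _ := add_le_add (mul_le_mul_of_nonneg_left hgd hA) (mul_le_mul_of_nonneg_right hgd' hγ)
  linarith

theorem velocity_gap_le_of_touching {L : ℝ} {m Ft G : ℝ → ℝ} (hH : 0 < H) (hA : 0 ≤ A)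
    (hL : 0 ≤ L) (hγ : 0 ≤ γ)
    (hd : ∀ r ∈ Icc 0 R, HasDerivWithinAt φ (p r) (Icc 0 R) r)
    (hm : LipOnIcc R L m) (hm0 : m 0 = 0)
    (hF : ∀ r ∈ Icc 0 R, Ft r = 1 - H ^ 2 * r ^ 2 + radialMean m r) (hFR : Ft R ≤ 0)
    (hG : ∀ r ∈ Icc 0 R, 2 * r * (G r + H ^ 2 * r) = m r - radialMean m r)
    (hGL : ∀ r ∈ Icc 0 R, |G r + H ^ 2 * r| ≤ L)
    (h1 : 0 ≤ r₁) (h12 : r₁ < r₂) (h2 : r₂ ≤ R)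
    (hmod : ∀ a ∈ Icc 0 R, ∀ b ∈ Icc 0 R, a ≤ b →
      |φ b - φ a| ≤ A * (weightedRadius H b - weightedRadius H a) + γ)
    (ht : φ r₂ - φ r₁ = A * (weightedRadius H r₂ - weightedRadius H r₁) + γ) :
    (Ft r₂ / 2 * p r₂ + G r₂ * (φ r₂ - radialMean φ r₂))
        - (Ft r₁ / 2 * p r₁ + G r₁ * (φ r₁ - radialMean φ r₁))
      ≤ -2 * H * (A * (weightedRadius H r₂ - weightedRadius H r₁))
        + A * (L * (2 * H * R + 5) * (r₂ - r₁)) + 4 * L * γ := by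
  have m1 : r₁ ∈ Icc 0 R := ⟨h1, h12.le.trans h2⟩
  have m2 : r₂ ∈ Icc 0 R := ⟨h1.trans h12.le, h2⟩
  have h0 : (0:ℝ) ∈ Icc 0 R := ⟨le_rfl, m1.1.trans m1.2⟩
  have hφ : ContinuousOn φ (Icc 0 R) := fun r hr => (hd r hr).continuousWithinAt
  have hF0 : 0 ≤ Ft 0 := by rw [hF 0 h0]; simp [radialMean, hm0]
  have t1 := transport_le_of_touching hH hd hF0 hFR h1 h12 h2 hmod ht
  have t2 := le_moment_of_touching hH hφ hγ h1 h12 h2 hmod ht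
  have t3 := source_gap_le_of_modulus (g := fun r => G r + H ^ 2 * r) hH hA hL hφ hγ h1 h12 h2
    hmod hm hG hGL
  have i1 := linear_rate_identity hH m1.1
  have i2 := linear_rate_identity hH m2.1
  rw [hF r₁ m1, hF r₂ m2] at t1 ⊢
  have hpos : 0 < r₂ - r₁ := sub_pos.2 h12
  have t4 : radialMean m r₂ * invShift H r₂ ^ 4 - radialMean m r₁ * invShift H r₁ ^ 4
      ≤ L * (4 * H * R + 1) * (r₂ - r₁) := by
    have e1 := hm.radialMean hL r₁ m1 r₂ m2
    rw [abs_of_pos hpos] at e1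
    have e2 := hm.radialMean hL 0 h0 r₂ m2
    have e3 : radialMean m 0 = 0 := by simp [radialMean, hm0]
    rw [e3, sub_zero, sub_zero, abs_of_nonneg m2.1] at e2
    have e4 := abs_invShift_pow_four_sub_le hH h1 h12.le
    have e5 : invShift H r₁ ^ 4 ≤ 1 := pow_le_one₀ (invShift_pos hH h1).le (invShift_le_one hH h1)
    have e6 : 0 ≤ invShift H r₁ ^ 4 := pow_nonneg (invShift_pos hH h1).le 4
    calc _ = radialMean m r₂ * (invShift H r₂ ^ 4 - invShift H r₁ ^ 4)
          + (radialMean m r₂ - radialMean m r₁) * invShift H r₁ ^ 4 := by ring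
      _ ≤ (L * R) * (4 * H * (r₂ - r₁)) + (L * (r₂ - r₁)) * 1 := by
          apply add_le_add
          · refine (le_abs_self _).trans ?_
            rw [abs_mul]
            exact mul_le_mul (e2.trans (mul_le_mul_of_nonneg_left h2 hL)) e4 (abs_nonneg _)
              (mul_nonneg hL h0.2)
          · exact mul_le_mul ((le_abs_self _).trans e1) e5 e6 (mul_nonneg hL hpos.le)
      _ = _ := by ring
  have t5 := mul_le_mul_of_nonneg_left t4 (by linarith : 0 ≤ A / 2)
  have t6 := mul_le_mul_of_nonneg_left t2 (sq_nonneg H)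
  have i3 := congrArg (fun x => A * x) i1
  have i4 := congrArg (fun x => A * x) i2
  have t7 : 0 ≤ A * (L * (r₂ - r₁)) := by positivity
  nlinarith

end Touching

/-- Quadratic Lipschitz constant of `metricDefect` for data of Lipschitz constant at most `B`. -/
def defectConst (Λ κ R B : ℝ) : ℝ :=
  Real.exp (κ / 2 * (B ^ 2 * R * R)) * (κ / 2) * R * (1 + 3 * Λ * R ^ 2)

theorem defectConst_pos {Λ κ R B : ℝ} (hΛ : 0 < Λ) (hκ : 0 < κ) (hR : 0 < R) :
    0 < defectConst Λ κ R B := by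
  unfold defectConst
  positivity

theorem metricDefect_lip_of_lip {Λ κ R η B u : ℝ} {h : ℝ → ℝ → ℝ} (hΛ : 0 < Λ) (hκ : 0 < κ)
    (hR : 0 < R) (hη : 0 ≤ η) (hηB : η ≤ B) (hL : LipOnIcc R η (h u)) :
    LipOnIcc R (defectConst Λ κ R B * η ^ 2) (metricDefect Λ κ h u) := by
  have := metricDefect_lip (Λ := Λ) hΛ (by positivity) (metricF_lip hκ hη hηB hL)
  unfold defectConst
  convert this using 1
  ring

section Solution

variable {Λ κ R ε : ℝ} {h : ℝ → ℝ → ℝ}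

theorem IsC1Solution.hasDerivWithinAt_pdR (hs : IsC1Solution Λ κ R h) {u r : ℝ} (hu : 0 ≤ u)
    (hr : r ∈ Icc 0 R) : HasDerivWithinAt (h u) (pdR R h u r) (Icc 0 R) r :=
  (hs.2.1 u hu r hr).2.hasDerivWithinAt

theorem IsC1Solution.hasDerivWithinAt_pdU (hs : IsC1Solution Λ κ R h) {u r : ℝ} (hu : 0 ≤ u)
    (hr : r ∈ Icc 0 R) : HasDerivWithinAt (fun v => h v r) (pdU h u r) (Ici 0) u :=
  (hs.2.1 u hu r hr).1.hasDerivWithinAt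

theorem IsC1Solution.lipOnIcc (hs : IsC1Solution Λ κ R h)
    (hε : ∀ u ∈ Ici (0:ℝ), ∀ r ∈ Icc (0:ℝ) R, |h u r| + |pdR R h u r| < ε) {u : ℝ} (hu : 0 ≤ u) :
    LipOnIcc R ε (h u) := by
  intro a ha b hb
  refine (convex_Icc 0 R).norm_image_sub_le_of_norm_hasDerivWithin_le
    (fun r hr => hs.hasDerivWithinAt_pdR hu hr) (fun r hr => ?_) ha hb
  rw [Real.norm_eq_abs]
  linarith [hε u hu r hr, abs_nonneg (h u r)]

/-- The evolution equation extends by continuity to the centre `r = 0`. -/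
theorem IsC1Solution.evolution (hs : IsC1Solution Λ κ R h) (hΛ : 0 < Λ) (hκ : 0 < κ)
    (hR : 0 < R) (hε0 : 0 ≤ ε) {u : ℝ} (hu : 0 ≤ u) (hL : LipOnIcc R ε (h u)) {r : ℝ}
    (hr : r ∈ Icc 0 R) :
    pdU h u r = metricFt Λ κ h u r / 2 * pdR R h u r
      + coefG Λ κ h u r * (h u r - radialMean (h u) r) := by
  rcases hr.1.eq_or_lt with h0 | h0
  swap
  · have := hs.2.2.2.2 u hu r ⟨h0, hr.2⟩
    rw [radAvg_eq_radialMean] at this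
    linarith
  subst h0
  have hF := metricF_lip (B := ε) hκ hε0 le_rfl hL
  have hm := metricDefect_lip_of_lip (B := ε) hΛ hκ hR hε0 le_rfl hL
  have hM0 : 0 ≤ defectConst Λ κ R ε * ε ^ 2 :=
    mul_nonneg (defectConst_pos hΛ hκ hR).le (sq_nonneg ε)
  set M := defectConst Λ κ R ε * ε ^ 2 with hMdef
  have hFt : ContinuousOn (metricFt Λ κ h u) (Icc 0 R) := by
    have hc : ContinuousOn (fun r => 1 - Λ / 3 * r ^ 2 + radialMean (metricDefect Λ κ h u) r)
        (Icc 0 R) :=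
      ContinuousOn.add (by fun_prop) (hm.radialMean hM0).continuousOn
    exact hc.congr fun r hr => metricFt_eq hr hF
  have hmaps : MapsTo (fun r : ℝ => (u, r)) (Icc 0 R) (Ici 0 ×ˢ Icc 0 R) :=
    fun r hr => ⟨hu, hr⟩
  have hcU : ContinuousOn (fun r => pdU h u r) (Icc 0 R) :=
    hs.2.2.1.comp (f := fun r : ℝ => (u, r)) (by fun_prop) hmaps
  have hcR : ContinuousOn (fun r => pdR R h u r) (Icc 0 R) :=
    hs.2.2.2.1.comp (f := fun r : ℝ => (u, r)) (by fun_prop) hmaps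
  have hcont : ContinuousOn (fun r => |pdU h u r - metricFt Λ κ h u r / 2 * pdR R h u r|
      - (M + Λ / 3 * R) * (ε * r)) (Icc 0 R) := by fun_prop
  have hle : ∀ r ∈ Ioc 0 R, |pdU h u r - metricFt Λ κ h u r / 2 * pdR R h u r|
      - (M + Λ / 3 * R) * (ε * r) ≤ 0 := by
    intro r hr
    have hr' : r ∈ Icc 0 R := ⟨hr.1.le, hr.2⟩
    rw [hs.2.2.2.2 u hu r hr, radAvg_eq_radialMean, abs_mul, sub_nonpos]
    refine mul_le_mul ?_ (hL.abs_sub_radialMean_le hε0 hr') (abs_nonneg _) (by positivity)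
    have h1 := abs_coefG_le hr' hF hM0 hm
    have h2 := abs_sub (coefG Λ κ h u r + Λ / 3 * r) (Λ / 3 * r)
    rw [add_sub_cancel_right, abs_of_nonneg (by have := hr.1; positivity : 0 ≤ Λ / 3 * r)] at h2
    have h3 : Λ / 3 * r ≤ Λ / 3 * R := mul_le_mul_of_nonneg_left hr.2 (by positivity)
    linarith
  have : (nhdsWithin (0:ℝ) (Ioc 0 R)).NeBot := by
    rw [← mem_closure_iff_nhdsWithin_neBot, closure_Ioc hR.ne]
    exact left_mem_Icc.2 hR.le
  have hlim := le_of_tendsto ((hcont 0 hr).mono Ioc_subset_Icc_self)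
    (Filter.mem_of_superset self_mem_nhdsWithin hle)
  have hG0 : coefG Λ κ h u 0 = 0 := by simp [coefG]
  rw [hG0, zero_mul, add_zero]
  simp only [mul_zero, sub_zero] at hlim
  exact sub_eq_zero.1 (abs_nonpos_iff.1 hlim)

theorem false_of_first_touching {H A K M γ : ℝ} (hs : IsC1Solution Λ κ R h) (hΛ : 0 < Λ)
    (hκ : 0 < κ) (hR : 0 < R) (hε0 : 0 ≤ ε) (hε1 : ε ≤ 1)
    (hL : ∀ u, 0 ≤ u → LipOnIcc R ε (h u)) (hH : 0 < H) (hHΛ : H ^ 2 = Λ / 3)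
    (hM : M = defectConst Λ κ R 1 * ε ^ 2)
    (hM1 : M * (2 * H * R + 5) ≤ H * invShift H R ^ 4) (hM2 : M * R ≤ H ^ 2 * R ^ 2 - 1)
    (hA : 0 ≤ A) (hγ : 0 < γ) (hK : 4 * M < K) {u a b : ℝ} (hu : 0 < u) (ha : 0 ≤ a)
    (hab : a < b) (hb : b ≤ R)
    (hbad : A * Real.exp (-H * u) * |weightedRadius H b - weightedRadius H a|
      + γ * Real.exp (K * u) ≤ |h u b - h u a|)
    (hbefore : ∀ v ∈ Ico 0 u, ∀ x ∈ Icc 0 R, ∀ y ∈ Icc 0 R, |h v y - h v x| <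
      A * Real.exp (-H * v) * |weightedRadius H y - weightedRadius H x| + γ * Real.exp (K * v)) :
    False := by
  have ma : a ∈ Icc 0 R := ⟨ha, hab.le.trans hb⟩
  have mb : b ∈ Icc 0 R := ⟨ha.trans hab.le, hb⟩
  have hLu := hL u hu.le
  have hF := metricF_lip hκ hε0 hε1 hLu
  have hm := metricDefect_lip_of_lip hΛ hκ hR hε0 hε1 hLu
  rw [← hM] at hm
  have hM0 : 0 ≤ M := by
    rw [hM]; exact mul_nonneg (defectConst_pos hΛ hκ hR).le (sq_nonneg ε)
  have hρ : ∀ x y, 0 ≤ x → x ≤ y → 0 ≤ weightedRadius H y - weightedRadius H x := by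
    intro x y hx hxy
    have := le_weightedRadius_sub hH hx hxy le_rfl
    have h2 : 0 ≤ invShift H y ^ 4 * (y - x) :=
      mul_nonneg (pow_nonneg (invShift_pos hH (hx.trans hxy)).le 4) (by linarith)
    linarith
  have hnow : ∀ x ∈ Icc 0 R, ∀ y ∈ Icc 0 R, |h u y - h u x| ≤
      A * Real.exp (-H * u) * |weightedRadius H y - weightedRadius H x| + γ * Real.exp (K * u) := by
    intro x hx y hy
    have : (nhdsWithin u (Ico 0 u)).NeBot := by
      rw [← mem_closure_iff_nhdsWithin_neBot, closure_Ico hu.ne]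
      exact right_mem_Icc.2 hu.le
    have hsub : Ico 0 u ⊆ Ici 0 := fun v hv => hv.1
    have c1 : ContinuousWithinAt (fun v => |h v y - h v x|) (Ico 0 u) u :=
      ((((hs.hasDerivWithinAt_pdU hu.le hy).continuousWithinAt).sub
        ((hs.hasDerivWithinAt_pdU hu.le hx).continuousWithinAt)).abs).mono hsub
    have c2 : ContinuousWithinAt (fun v => A * Real.exp (-H * v) *
        |weightedRadius H y - weightedRadius H x| + γ * Real.exp (K * v)) (Ico 0 u) u := by
      fun_prop
    exact le_of_tendsto_of_tendsto c1 c2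
      (Filter.mem_of_superset self_mem_nhdsWithin fun v hv => (hbefore v hv x hx y hy).le)
  have heq := le_antisymm (hnow a ma b mb) hbad
  obtain ⟨σ, hσ, hσe⟩ : ∃ σ : ℝ, |σ| = 1 ∧ σ * (h u b - h u a) = |h u b - h u a| := by
    rcases le_total 0 (h u b - h u a) with hc | hc
    · exact ⟨1, by simp, by rw [abs_of_nonneg hc, one_mul]⟩
    · exact ⟨-1, by simp, by rw [abs_of_nonpos hc]; ring⟩
  have hσle : ∀ x : ℝ, σ * x ≤ |x| := fun x => by
    refine (le_abs_self _).trans ?_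
    rw [abs_mul, hσ, one_mul]
  rw [abs_of_nonneg (hρ a b ha hab.le)] at heq
  have hvel := velocity_gap_le_of_touching (φ := fun r => σ * h u r)
    (p := fun r => σ * pdR R h u r) (H := H) (R := R) (A := A * Real.exp (-H * u))
    (γ := γ * Real.exp (K * u)) (r₁ := a) (r₂ := b) (L := M) (m := metricDefect Λ κ h u)
    (Ft := metricFt Λ κ h u) (G := coefG Λ κ h u) hH (by positivity) hM0 (by positivity)
    (fun r hr => (hs.hasDerivWithinAt_pdR hu.le hr).const_mul σ) hm (metricDefect_zero ..)
    (fun r hr => by rw [hHΛ]; exact metricFt_eq hr hF)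
    (by
      have mR : R ∈ Icc 0 R := ⟨hR.le, le_rfl⟩
      have e := hm.radialMean hM0 0 ⟨le_rfl, hR.le⟩ R mR
      have e0 : radialMean (metricDefect Λ κ h u) 0 = 0 := by
        simp [radialMean, metricDefect_zero]
      rw [e0, sub_zero, sub_zero, abs_of_pos hR] at e
      rw [metricFt_eq mR hF, ← hHΛ]
      linarith [le_abs_self (radialMean (metricDefect Λ κ h u) R)])
    (fun r hr => by rw [hHΛ]; exact two_mul_coefG hr hF)
    (fun r hr => by rw [hHΛ]; exact abs_coefG_le hr hF hM0 hm) ha hab hb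
    (fun x hx y hy hxy => by
      rw [← mul_sub, abs_mul, hσ, one_mul]
      have := hnow x hx y hy
      rwa [abs_of_nonneg (hρ x y hx.1 hxy)] at this)
    (by rw [← mul_sub, hσe, heq])
  simp only [radialMean_const_mul] at hvel
  have ea := hs.evolution hΛ hκ hR hε0 hu.le hLu ma
  have eb := hs.evolution hΛ hκ hR hε0 hu.le hLu mb
  have hIcc : Icc 0 u ⊆ Ici 0 := fun v hv => hv.1
  have hexp : ∀ c : ℝ, HasDerivAt (fun v => Real.exp (c * v)) (Real.exp (c * u) * c) u := by
    intro c
    simpa using ((hasDerivAt_id u).const_mul c).exp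
  have hψ := (((((hs.hasDerivWithinAt_pdU hu.le mb).mono hIcc).sub
    ((hs.hasDerivWithinAt_pdU hu.le ma).mono hIcc)).const_mul σ).sub
    (((hexp (-H)).hasDerivWithinAt.const_mul A).mul_const
      (weightedRadius H b - weightedRadius H a))).sub
    ((hexp K).hasDerivWithinAt.const_mul γ)
  have hpos := hasDerivWithinAt_nonneg_of_max hu hψ (by
    intro v hv
    have h1 := hbefore v hv a ma b mb
    rw [abs_of_nonneg (hρ a b ha hab.le)] at h1
    have h2 := hσle (h v b - h v a)
    simp only [Pi.sub_apply]
    linarith)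
  have hw := le_weightedRadius_sub hH ha hab.le hb
  have hδ : M * (2 * H * R + 5) * (b - a) ≤ H * (weightedRadius H b - weightedRadius H a) := by
    calc _ ≤ H * invShift H R ^ 4 * (b - a) := mul_le_mul_of_nonneg_right hM1 (by linarith)
      _ = H * (invShift H R ^ 4 * (b - a)) := by ring
      _ ≤ _ := mul_le_mul_of_nonneg_left hw hH.le
  have hδ' := mul_le_mul_of_nonneg_left hδ (by positivity : 0 ≤ A * Real.exp (-H * u))
  have hK' : 0 < (K - 4 * M) * (γ * Real.exp (K * u)) := mul_pos (by linarith) (by positivity)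
  rw [ea, eb] at hpos
  linarith

theorem IsC1Solution.lipOnIcc_exp_decay {H M : ℝ} (hs : IsC1Solution Λ κ R h) (hΛ : 0 < Λ)
    (hκ : 0 < κ) (hR : 0 < R) (hε0 : 0 ≤ ε) (hε1 : ε ≤ 1)
    (hL : ∀ u, 0 ≤ u → LipOnIcc R ε (h u)) (hH : 0 < H) (hHΛ : H ^ 2 = Λ / 3)
    (hM : M = defectConst Λ κ R 1 * ε ^ 2)
    (hM1 : M * (2 * H * R + 5) ≤ H * invShift H R ^ 4) (hM2 : M * R ≤ H ^ 2 * R ^ 2 - 1)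
    {u : ℝ} (hu : 0 ≤ u) :
    LipOnIcc R (ε / invShift H R ^ 4 * Real.exp (-H * u)) (h u) := by
  set A := ε / invShift H R ^ 4 with hAdef
  have hc : 0 < invShift H R ^ 4 := pow_pos (invShift_pos hH hR.le) 4
  have hA : 0 ≤ A := by positivity
  set K := 4 * M + 1 with hKdef
  have key : ∀ γ > 0, ∀ v ∈ Ici (0:ℝ), ∀ x ∈ Icc 0 R, ∀ y ∈ Icc 0 R, |h v y - h v x| <
      A * Real.exp (-H * v) * |weightedRadius H y - weightedRadius H x|
        + γ * Real.exp (K * v) := by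
    intro γ hγ U hU x hx y hy
    by_contra! hcon
    have hρ := (continuousOn_weightedRadius hH).mono (fun r (hr : r ∈ Icc 0 R) => hr.1)
    have hScompact : IsCompact (Icc 0 U ×ˢ Icc 0 R ×ˢ Icc 0 R) :=
      isCompact_Icc.prod (isCompact_Icc.prod isCompact_Icc)
    set S : Set (ℝ × ℝ × ℝ) := Icc 0 U ×ˢ Icc 0 R ×ˢ Icc 0 R with hS
    have c1 : ContinuousOn (fun z : ℝ × ℝ × ℝ => weightedRadius H z.2.1) S :=
      hρ.comp (by fun_prop) fun z hz => hz.2.1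
    have c2 : ContinuousOn (fun z : ℝ × ℝ × ℝ => weightedRadius H z.2.2) S :=
      hρ.comp (by fun_prop) fun z hz => hz.2.2
    have c3 : ContinuousOn (fun z : ℝ × ℝ × ℝ => h z.1 z.2.1) S :=
      hs.1.comp (f := fun z : ℝ × ℝ × ℝ => (z.1, z.2.1)) (by fun_prop)
        fun z hz => ⟨hz.1.1, hz.2.1⟩
    have c4 : ContinuousOn (fun z : ℝ × ℝ × ℝ => h z.1 z.2.2) S :=
      hs.1.comp (f := fun z : ℝ × ℝ × ℝ => (z.1, z.2.2)) (by fun_prop)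
        fun z hz => ⟨hz.1.1, hz.2.2⟩
    have hBclosed := hScompact.isClosed.isClosed_le
      (f := fun z : ℝ × ℝ × ℝ => A * Real.exp (-H * z.1) *
        |weightedRadius H z.2.2 - weightedRadius H z.2.1| + γ * Real.exp (K * z.1))
      (g := fun z => |h z.1 z.2.2 - h z.1 z.2.1|) (by fun_prop) (c4.sub c3).abs
    have hBcompact := hScompact.of_isClosed_subset hBclosed (fun z hz => hz.1)
    obtain ⟨⟨u₀, a, b⟩, ⟨hz, hbad⟩, hmin⟩ := hBcompact.exists_isMinOn
      ⟨(U, x, y), ⟨⟨hU, le_rfl⟩, hx, hy⟩, hcon⟩ (continuous_fst.continuousOn)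
    simp only at hbad
    obtain ⟨⟨hu0, hu0U⟩, hz1, hz2⟩ := hz
    simp only at hu0 hu0U hz1 hz2
    have hbefore : ∀ v ∈ Ico 0 u₀, ∀ x ∈ Icc 0 R, ∀ y ∈ Icc 0 R, |h v y - h v x| <
        A * Real.exp (-H * v) * |weightedRadius H y - weightedRadius H x|
          + γ * Real.exp (K * v) := by
      intro v hv x hx y hy
      by_contra! hc
      have := hmin (a := (v, x, y)) ⟨⟨⟨hv.1, hv.2.le.trans hu0U⟩, hx, hy⟩, hc⟩
      exact absurd this (not_le.2 hv.2)
    have hγpos : 0 < γ * Real.exp (K * u₀) := by positivity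
    have hpos : 0 < u₀ := by
      refine hu0.lt_of_ne fun h0 => ?_
      have hρle : ∀ x ∈ Icc 0 R, ∀ y ∈ Icc 0 R, x ≤ y →
          ε * |y - x| ≤ A * |weightedRadius H y - weightedRadius H x| := by
        intro x hx y hy hxy
        have h1 := le_weightedRadius_sub hH hx.1 hxy hy.2
        rw [abs_of_nonneg (sub_nonneg.2 hxy)]
        calc ε * (y - x) = A * (invShift H R ^ 4 * (y - x)) := by
              rw [← mul_assoc, hAdef, div_mul_cancel₀ _ hc.ne']
          _ ≤ A * |weightedRadius H y - weightedRadius H x| :=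
            mul_le_mul_of_nonneg_left (h1.trans (le_abs_self _)) hA
      have h1 := hL u₀ hu0 a hz1 b hz2
      have h2 : ε * |b - a| ≤ A * |weightedRadius H b - weightedRadius H a| := by
        rcases le_total a b with hab | hab
        · exact hρle a hz1 b hz2 hab
        · rw [abs_sub_comm b, abs_sub_comm (weightedRadius H b)]
          exact hρle b hz2 a hz1 hab
      rw [← h0] at hbad h1 hγpos
      rw [mul_zero, Real.exp_zero, mul_one] at hbad
      linarith
    rcases lt_trichotomy a b with hab | hab | hab
    · exact false_of_first_touching hs hΛ hκ hR hε0 hε1 hL hH hHΛ hM hM1 hM2 hA hγ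
        (by linarith) hpos hz1.1 hab hz2.2 hbad hbefore
    · rw [hab] at hbad
      simp only [sub_self, abs_zero, mul_zero, zero_add] at hbad
      linarith
    · rw [abs_sub_comm, abs_sub_comm (h u₀ b)] at hbad
      exact false_of_first_touching hs hΛ hκ hR hε0 hε1 hL hH hHΛ hM hM1 hM2 hA hγ
        (by linarith) hpos hz2.1 hab hz1.2 hbad hbefore
  apply LipOnIcc.of_le
  intro a ha b hb hab
  have h1 : |h u b - h u a| ≤ A * Real.exp (-H * u) * |weightedRadius H b - weightedRadius H a| := by
    refine le_of_forall_pos_le_add fun δ hδ => ?_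
    have := key (δ * Real.exp (-(K * u))) (by positivity) u hu a ha b hb
    rw [mul_assoc δ, ← Real.exp_add, neg_add_cancel, Real.exp_zero, mul_one] at this
    exact this.le
  refine h1.trans (mul_le_mul_of_nonneg_left ?_ (by positivity))
  have h2 := le_weightedRadius_sub hH ha.1 hab hb.2
  have h3 : 0 ≤ invShift H R ^ 4 * (b - a) := mul_nonneg hc.le (sub_nonneg.2 hab)
  rw [abs_of_nonneg (h3.trans h2)]
  exact weightedRadius_sub_le hH ha.1 hab

end Solution

/-- Exponential convergence of the metric coefficients to those of
de Sitter in Bondi coordinates (`f ≡ 1`, `f̃ = 1 − (Λ/3)r²`) at rate `2H`, `H = √(Λ/3)`,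
for C¹ solutions with small `sup(|h|+|∂_r h|)`. -/
theorem metric_exponential_decay_to_deSitter
    (Λ κ R : ℝ) (hΛ : 0 < Λ) (hκ : 0 < κ) (hR : Real.sqrt (3 / Λ) < R) :
    ∃ ε > (0:ℝ), ∀ h : ℝ → ℝ → ℝ, IsC1Solution Λ κ R h →
      (∀ u ∈ Ici (0:ℝ), ∀ r ∈ Icc (0:ℝ) R, |h u r| + |pdR R h u r| < ε) →
      ∃ C > (0:ℝ), ∀ u ∈ Ici (0:ℝ), ∀ r ∈ Icc (0:ℝ) R,
        |metricF κ h u r - 1| ≤ C * Real.exp (-2 * Real.sqrt (Λ / 3) * u) ∧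
        |metricFt Λ κ h u r - (1 - Λ / 3 * r ^ 2)| ≤ C * Real.exp (-2 * Real.sqrt (Λ / 3) * u) := by
  set H := Real.sqrt (Λ / 3) with hHdef
  have hH : 0 < H := Real.sqrt_pos.2 (by positivity)
  have hHΛ : H ^ 2 = Λ / 3 := Real.sq_sqrt (by positivity)
  have hR0 : 0 < R := (Real.sqrt_nonneg _).trans_lt hR
  have hHR : 0 < H ^ 2 * R ^ 2 - 1 := by
    have h1 := (Real.sqrt_lt' hR0).1 hR
    rw [div_lt_iff₀ hΛ] at h1
    rw [hHΛ]
    linarith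
  have hc : 0 < invShift H R ^ 4 := pow_pos (invShift_pos hH hR0.le) 4
  have hD := defectConst_pos (B := 1) hΛ hκ hR0
  set D := defectConst Λ κ R 1 with hDdef
  obtain ⟨ε, hε0, hε1, hM1, hM2⟩ : ∃ ε > 0, ε ≤ 1 ∧
      D * ε ^ 2 * (2 * H * R + 5) ≤ H * invShift H R ^ 4 ∧
      D * ε ^ 2 * R ≤ H ^ 2 * R ^ 2 - 1 := by
    refine ⟨min 1 (min (H * invShift H R ^ 4 / (D * (2 * H * R + 5)))
      ((H ^ 2 * R ^ 2 - 1) / (D * R))), by positivity, min_le_left _ _, ?_⟩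
    set ε := min 1 (min (H * invShift H R ^ 4 / (D * (2 * H * R + 5)))
      ((H ^ 2 * R ^ 2 - 1) / (D * R))) with hε
    have h0 : 0 < ε := by positivity
    have h1 : ε ≤ 1 := min_le_left _ _
    have h2 : ε ≤ H * invShift H R ^ 4 / (D * (2 * H * R + 5)) :=
      (min_le_right _ _).trans (min_le_left _ _)
    have h3 : ε ≤ (H ^ 2 * R ^ 2 - 1) / (D * R) := (min_le_right _ _).trans (min_le_right _ _)
    have hsq : ε ^ 2 ≤ ε := by nlinarith
    rw [le_div_iff₀ (by positivity)] at h2 h3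
    constructor
    · calc D * ε ^ 2 * (2 * H * R + 5) ≤ D * ε * (2 * H * R + 5) := by gcongr
        _ = ε * (D * (2 * H * R + 5)) := by ring
        _ ≤ _ := h2
    · calc D * ε ^ 2 * R ≤ D * ε * R := by gcongr
        _ = ε * (D * R) := by ring
        _ ≤ _ := h3
  refine ⟨ε, hε0, fun h hs hsmall => ?_⟩
  set A := ε / invShift H R ^ 4 with hA
  have hA0 : 0 < A := by positivity
  set E := Real.exp (κ / 2 * (A ^ 2 * R * R)) * (κ / 2) * R with hE
  have hE0 : 0 < E := by positivity
  have hDA := defectConst_pos (B := A) hΛ hκ hR0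
  refine ⟨max (E * A ^ 2 * R) (defectConst Λ κ R A * A ^ 2 * R), by positivity,
    fun u hu r hr => ?_⟩
  have hlip := hs.lipOnIcc_exp_decay hΛ hκ hR0 hε0.le hε1
    (fun u hu => hs.lipOnIcc hsmall hu) hH hHΛ rfl hM1 hM2 hu
  set η := A * Real.exp (-H * u) with hη
  have hη0 : 0 ≤ η := by positivity
  have hηA : η ≤ A :=
    mul_le_of_le_one_right hA0.le (Real.exp_le_one_iff.2 (by nlinarith [mem_Ici.1 hu]))
  have hη2 : η ^ 2 = A ^ 2 * Real.exp (-2 * H * u) := by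
    rw [hη, mul_pow, ← Real.exp_nat_mul]
    congr 2
    push_cast
    ring
  have hF := metricF_lip hκ hη0 hηA hlip
  have hm := metricDefect_lip_of_lip hΛ hκ hR0 hη0 hηA hlip
  rw [← hE] at hF
  constructor
  · calc |metricF κ h u r - 1| ≤ E * η ^ 2 * r := abs_metricF_sub_one_le hr hF
      _ ≤ E * η ^ 2 * R := mul_le_mul_of_nonneg_left hr.2 (by positivity)
      _ = E * A ^ 2 * R * Real.exp (-2 * H * u) := by rw [hη2]; ring
      _ ≤ _ := mul_le_mul_of_nonneg_right (le_max_left _ _) (Real.exp_pos _).le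
  · have hM0 : 0 ≤ defectConst Λ κ R A * η ^ 2 := by positivity
    have h1 := hm.radialMean hM0 0 ⟨le_rfl, hR0.le⟩ r hr
    have h2 : radialMean (metricDefect Λ κ h u) 0 = 0 := by
      simp [radialMean, metricDefect_zero]
    rw [h2, sub_zero, sub_zero, abs_of_nonneg hr.1] at h1
    calc |metricFt Λ κ h u r - (1 - Λ / 3 * r ^ 2)|
        = |radialMean (metricDefect Λ κ h u) r| := by
          rw [metricFt_eq hr hF, add_sub_cancel_left]
      _ ≤ defectConst Λ κ R A * η ^ 2 * r := h1
      _ ≤ defectConst Λ κ R A * η ^ 2 * R := mul_le_mul_of_nonneg_left hr.2 hM0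
      _ = defectConst Λ κ R A * A ^ 2 * R * Real.exp (-2 * H * u) := by rw [hη2]; ring
      _ ≤ _ := mul_le_mul_of_nonneg_right (le_max_right _ _) (Real.exp_pos _).le
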